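/- Fix T > 0, ε > 0, c ≥ 0 and p ∈ (0,1], and let (φᵏ)_{k∈ℕ} be the solution of the directed-chain Riccati system. Then for every z ∈ [0,1) and every t ∈ [0,T], the series ∑_{k=0}^{∞} zᵏ·φᵏ(t) converges, and its sum equals b(z)·((b(z)+q(z))·e^{b(z)(T−t)} − (b(z)−q(z))·e^{−b(z)(T−t)}) / ((b(z)+q(z))·e^{b(z)(T−t)} + (b(z)−q(z))·e^{−b(z)(T−t)}), where b(z) = √(pε(1−z)) and q(z) = pc(1−z). -/

import Mathlib

/-!
Write `S_N(t) = ∑_{k<N} zᵏ φᵏ(t)`.  Everything rests on one backward comparison principle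
(`nonneg_of_deriv_le`): if `u' ≤ a u` on `[0,T]` and `u(T) ≥ 0`, then `u ≥ 0`.

By strong induction it gives `φᵏ ≤ 0` for `k ≥ 1`.  For `N ≥ 2` the truncated sums satisfy
`S_N' = S_N² - R_N - pε(1-z)` with a remainder `R_N` collecting the products `zⁱφⁱ zʲφʲ` with
`i, j < N ≤ i + j`; both indices are positive there, so `R_N ≥ 0` and the comparison principle
yields `S_N ≥ 0` for all `z ∈ [0,1]`.  At `z = 0` this says `φ⁰ ≥ 0`; at `z = 1` it is the bound
`∑_{k<N} |φᵏ| ≤ 2 φ⁰` (`sum_abs_le`), hence the series converges absolutely, and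
`R_N ≤ z^N (2 φ⁰)²`.

Let `F` be the explicit solution of `F' = F² - pε(1-z)`, `F(T) = pc(1-z)`, which is nonnegative.
Then `D = S_N - F` solves `D' = (S_N + F) D - R_N`, `D(T) = 0`, and two more comparisons give
`0 ≤ D ≤ z^N (2 sup φ⁰)² (T - t)` (`sum_sub_bounds`), which tends to `0` for `z < 1`.
-/

open Real

/-- The directed-chain Riccati system with horizon `T`, running-cost weight `ε`,
terminal-cost weight `c` and interaction probability `p`. -/
def DirectedChainRiccati (T ε c p : ℝ) (φ : ℕ → ℝ → ℝ) : Prop :=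
  (∀ k, ContDiffOn ℝ 1 (φ k) (Set.Icc 0 T)) ∧
  (∀ t ∈ Set.Icc (0:ℝ) T,
    HasDerivWithinAt (φ 0) ((φ 0 t) ^ 2 - p * ε) (Set.Icc 0 T) t) ∧
  φ 0 T = p * c ∧
  (∀ t ∈ Set.Icc (0:ℝ) T,
    HasDerivWithinAt (φ 1) (2 * φ 0 t * φ 1 t + p * ε) (Set.Icc 0 T) t) ∧
  φ 1 T = -(p * c) ∧
  (∀ k, 2 ≤ k →
    (∀ t ∈ Set.Icc (0:ℝ) T,
      HasDerivWithinAt (φ k) (∑ j ∈ Finset.range (k + 1), φ j t * φ (k - j) t)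
        (Set.Icc 0 T) t) ∧
    φ k T = 0)

/-- Backward comparison principle, proved with the integrating factor `exp (-∫₀ᵗ a)`. -/
lemma nonneg_of_deriv_le {T : ℝ} (hT : 0 < T) {a u u' : ℝ → ℝ}
    (ha : ContinuousOn a (Set.Icc 0 T))
    (hu : ∀ t ∈ Set.Icc (0:ℝ) T, HasDerivWithinAt u (u' t) (Set.Icc 0 T) t)
    (hle : ∀ t ∈ Set.Icc (0:ℝ) T, u' t ≤ a t * u t) (huT : 0 ≤ u T) :
    ∀ t ∈ Set.Icc (0:ℝ) T, 0 ≤ u t := by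
  -- a continuous extension of `a` to the line, so that its primitive is differentiable everywhere
  set α : ℝ → ℝ := Set.IccExtend hT.le ((Set.Icc 0 T).domRestrict a) with hα
  have hαc : Continuous α := by
    rw [hα]
    exact (continuousOn_iff_continuous_domRestrict.1 ha).Icc_extend'
  have hαa : ∀ t ∈ Set.Icc (0:ℝ) T, α t = a t := fun t ht => by
    rw [hα, Set.IccExtend_of_mem _ _ ht]; rfl
  have hA : ∀ t, HasDerivAt (fun s => ∫ x in (0:ℝ)..s, α x) (α t) t := fun t =>
    (hαc.integral_hasStrictDerivAt 0 t).hasDerivAt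
  have hw : ∀ t ∈ Set.Icc (0:ℝ) T, HasDerivWithinAt
      (fun s => u s * exp (-∫ x in (0:ℝ)..s, α x))
      ((u' t - α t * u t) * exp (-∫ x in (0:ℝ)..t, α x)) (Set.Icc 0 T) t := fun t ht => by
    have := (hu t ht).fun_mul ((hA t).fun_neg.exp.hasDerivWithinAt (s := Set.Icc 0 T))
    exact this.congr_deriv (by ring)
  have hanti : AntitoneOn (fun s => u s * exp (-∫ x in (0:ℝ)..s, α x)) (Set.Icc 0 T) := by
    refine antitoneOn_of_hasDerivWithinAt_nonpos (convex_Icc 0 T)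
      (fun t ht => (hw t ht).continuousWithinAt)
      (fun t ht => (hw t (interior_subset ht)).mono interior_subset) fun t ht => ?_
    have ht' := interior_subset ht
    have := hle t ht'
    rw [hαa t ht']
    exact mul_nonpos_of_nonpos_of_nonneg (by linarith) (exp_pos _).le
  intro t ht
  have h := hanti ht (Set.right_mem_Icc.2 hT.le) ht.2
  have h2 : 0 ≤ u t * exp (-∫ x in (0:ℝ)..t, α x) :=
    (mul_nonneg huT (exp_pos _).le).trans h
  exact nonneg_of_mul_nonneg_left h2 (exp_pos _)

/-- The coefficients of `1 - z`: the inhomogeneity of the system is `-pε · delta k` and its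
terminal value is `pc · delta k`. -/
noncomputable def delta : ℕ → ℝ
  | 0 => 1
  | 1 => -1
  | _ + 2 => 0

lemma sum_delta (z : ℝ) (n : ℕ) : ∑ k ∈ Finset.range (n + 2), z ^ k * delta k = 1 - z := by
  induction n with
  | zero => simp [Finset.sum_range_succ, delta]; ring
  | succ n ih => rw [Finset.sum_range_succ, ih]; simp [delta]

/-- The part of `(∑_{k<N} g k)²` that is missing from the Cauchy product truncated at
order `N`. -/
noncomputable def remainder (g : ℕ → ℝ) (N : ℕ) : ℝ :=
  ∑ m ∈ Finset.range N, ∑ k ∈ Finset.Ico (N - m) N, g m * g k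

lemma conv_eq (g : ℕ → ℝ) (N : ℕ) :
    ∑ k ∈ Finset.range N, ∑ j ∈ Finset.range (k + 1), g j * g (k - j) =
      (∑ k ∈ Finset.range N, g k) ^ 2 - remainder g N := by
  rw [Finset.sum_range_diag_flip N fun i j => g i * g j, remainder, eq_sub_iff_add_eq,
    ← Finset.sum_add_distrib, sq, Finset.sum_mul_sum]
  refine Finset.sum_congr rfl fun m _ => ?_
  rw [Finset.range_eq_Ico, Finset.sum_Ico_consecutive _ (Nat.zero_le _) (Nat.sub_le _ _),
    ← Finset.range_eq_Ico]

lemma remainder_nonneg {g : ℕ → ℝ} (hg : ∀ k, 1 ≤ k → g k ≤ 0) (N : ℕ) :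
    0 ≤ remainder g N := by
  refine Finset.sum_nonneg fun m hm => Finset.sum_nonneg fun k hk => ?_
  simp only [Finset.mem_range, Finset.mem_Ico] at hm hk
  exact mul_nonneg_of_nonpos_of_nonpos (hg m (by omega)) (hg k (by omega))

lemma remainder_le (f : ℕ → ℝ) {z : ℝ} (hz0 : 0 ≤ z) (hz1 : z ≤ 1) (N : ℕ) :
    remainder (fun k => z ^ k * f k) N ≤ z ^ N * (∑ k ∈ Finset.range N, |f k|) ^ 2 := by
  rw [remainder, sq, Finset.sum_mul_sum, Finset.mul_sum]
  refine Finset.sum_le_sum fun m _ => ?_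
  rw [Finset.mul_sum]
  calc ∑ k ∈ Finset.Ico (N - m) N, z ^ m * f m * (z ^ k * f k)
      ≤ ∑ k ∈ Finset.Ico (N - m) N, z ^ N * (|f m| * |f k|) := by
        refine Finset.sum_le_sum fun k hk => ?_
        have hk' := Finset.mem_Ico.1 hk
        calc z ^ m * f m * (z ^ k * f k) = z ^ (m + k) * (f m * f k) := by ring
          _ ≤ z ^ (m + k) * (|f m| * |f k|) := by
            rw [← abs_mul]
            exact mul_le_mul_of_nonneg_left (le_abs_self _) (by positivity)
          _ ≤ z ^ N * (|f m| * |f k|) :=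
            mul_le_mul_of_nonneg_right (pow_le_pow_of_le_one hz0 hz1 (by omega)) (by positivity)
    _ ≤ ∑ k ∈ Finset.range N, z ^ N * (|f m| * |f k|) := by
        refine Finset.sum_le_sum_of_subset_of_nonneg (fun k hk => ?_) fun _ _ _ => by positivity
        exact Finset.mem_range.2 (Finset.mem_Ico.1 hk).2

namespace DirectedChainRiccati

variable {T ε c p : ℝ} {φ : ℕ → ℝ → ℝ}

lemma hasDeriv (hφ : DirectedChainRiccati T ε c p φ) (k : ℕ) {t : ℝ}
    (ht : t ∈ Set.Icc (0:ℝ) T) :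
    HasDerivWithinAt (φ k)
      (∑ j ∈ Finset.range (k + 1), φ j t * φ (k - j) t - p * ε * delta k) (Set.Icc 0 T) t := by
  obtain ⟨-, h0, -, h1, -, h2⟩ := hφ
  match k with
  | 0 => convert h0 t ht using 1; simp [delta]; ring
  | 1 => convert h1 t ht using 1; simp [delta, Finset.sum_range_succ]; ring
  | k + 2 => convert (h2 (k + 2) (by omega)).1 t ht using 1; simp [delta]

lemma terminal (hφ : DirectedChainRiccati T ε c p φ) (k : ℕ) : φ k T = p * c * delta k := by
  obtain ⟨-, -, h0, -, h1, h2⟩ := hφ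
  match k with
  | 0 => simp [delta, h0]
  | 1 => simp [delta, h1]
  | k + 2 => simp [delta, (h2 (k + 2) (by omega)).2]

lemma nonpos (hφ : DirectedChainRiccati T ε c p φ) (hT : 0 < T) (hpε : 0 ≤ p * ε)
    (hpc : 0 ≤ p * c) (k : ℕ) (hk : 1 ≤ k) : ∀ t ∈ Set.Icc (0:ℝ) T, φ k t ≤ 0 := by
  induction k using Nat.strong_induction_on with
  | _ k ih =>
    obtain ⟨n, rfl⟩ : ∃ n, k = n + 1 := ⟨k - 1, by omega⟩
    have hδ : delta (n + 1) ≤ 0 := by cases n <;> simp [delta]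
    have key := nonneg_of_deriv_le hT (a := fun t => 2 * φ 0 t) (u := fun t => -φ (n + 1) t)
      (continuousOn_const.mul (hφ.1 0).continuousOn)
      (fun t ht => (hφ.hasDeriv (n + 1) ht).neg) (fun t ht => ?_) ?_
    · exact fun t ht => by have := key t ht; linarith
    · -- the products other than `φ⁰φᵏ` and `φᵏφ⁰` have two nonpositive factors
      have hsum : 0 ≤ ∑ j ∈ Finset.range n, φ (j + 1) t * φ (n + 1 - (j + 1)) t := by
        refine Finset.sum_nonneg fun j hj => ?_
        have hj' := Finset.mem_range.1 hj
        exact mul_nonneg_of_nonpos_of_nonpos (ih _ (by omega) (by omega) t ht)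
          (ih _ (by omega) (by omega) t ht)
      rw [Finset.sum_range_succ, Finset.sum_range_succ']
      simp only [Nat.sub_self, Nat.sub_zero]
      nlinarith [mul_nonneg hpε (neg_nonneg.2 hδ)]
    · rw [hφ.terminal]
      nlinarith [mul_nonneg hpc (neg_nonneg.2 hδ)]

/-- The truncated generating function solves the scalar Riccati equation up to the remainder. -/
lemma hasDeriv_sum (hφ : DirectedChainRiccati T ε c p φ) (z : ℝ) (n : ℕ) {t : ℝ}
    (ht : t ∈ Set.Icc (0:ℝ) T) :
    HasDerivWithinAt (fun s => ∑ k ∈ Finset.range (n + 2), z ^ k * φ k s)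
      ((∑ k ∈ Finset.range (n + 2), z ^ k * φ k t) ^ 2
        - remainder (fun k => z ^ k * φ k t) (n + 2) - p * ε * (1 - z)) (Set.Icc 0 T) t := by
  have h := HasDerivWithinAt.fun_sum (u := Finset.range (n + 2))
    fun k _ => (hφ.hasDeriv k ht).const_mul (z ^ k)
  refine h.congr_deriv (Eq.symm ?_)
  rw [← conv_eq, ← sum_delta z n, Finset.mul_sum, ← Finset.sum_sub_distrib]
  refine Finset.sum_congr rfl fun k _ => ?_
  rw [mul_sub, Finset.mul_sum]
  congr 1
  · refine Finset.sum_congr rfl fun j hj => ?_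
    have hj' := Finset.mem_range.1 hj
    rw [← Nat.add_sub_of_le (show j ≤ k by omega), pow_add, Nat.add_sub_cancel_left]
    ring
  · ring

lemma terminal_sum (hφ : DirectedChainRiccati T ε c p φ) (z : ℝ) (n : ℕ) :
    ∑ k ∈ Finset.range (n + 2), z ^ k * φ k T = p * c * (1 - z) := by
  rw [← sum_delta z n, Finset.mul_sum]
  exact Finset.sum_congr rfl fun k _ => by rw [hφ.terminal]; ring

lemma sum_nonneg (hφ : DirectedChainRiccati T ε c p φ) (hT : 0 < T) (hpε : 0 ≤ p * ε)
    (hpc : 0 ≤ p * c) {z : ℝ} (hz0 : 0 ≤ z) (hz1 : z ≤ 1) (n : ℕ) :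
    ∀ t ∈ Set.Icc (0:ℝ) T, 0 ≤ ∑ k ∈ Finset.range (n + 2), z ^ k * φ k t := by
  refine nonneg_of_deriv_le hT (fun t ht => (hφ.hasDeriv_sum z n ht).continuousWithinAt)
    (fun t ht => hφ.hasDeriv_sum z n ht) (fun t ht => ?_) ?_
  · have := remainder_nonneg (g := fun k => z ^ k * φ k t) (fun k hk =>
      mul_nonpos_of_nonneg_of_nonpos (by positivity) (hφ.nonpos hT hpε hpc k hk t ht)) (n + 2)
    nlinarith [mul_nonneg hpε (sub_nonneg.2 hz1)]
  · rw [hφ.terminal_sum]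
    exact mul_nonneg hpc (sub_nonneg.2 hz1)

lemma zero_nonneg (hφ : DirectedChainRiccati T ε c p φ) (hT : 0 < T) (hpε : 0 ≤ p * ε)
    (hpc : 0 ≤ p * c) {t : ℝ} (ht : t ∈ Set.Icc (0:ℝ) T) : 0 ≤ φ 0 t := by
  have := hφ.sum_nonneg hT hpε hpc le_rfl zero_le_one 0 t ht
  simpa [Finset.sum_range_succ] using this

/-- The sign pattern of the `φᵏ` turns nonnegativity of the sums at `z = 1` into an absolute
bound. -/
lemma sum_abs_le (hφ : DirectedChainRiccati T ε c p φ) (hT : 0 < T) (hpε : 0 ≤ p * ε)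
    (hpc : 0 ≤ p * c) (n : ℕ) {t : ℝ} (ht : t ∈ Set.Icc (0:ℝ) T) :
    ∑ k ∈ Finset.range (n + 2), |φ k t| ≤ 2 * φ 0 t := by
  have h := hφ.sum_nonneg hT hpε hpc zero_le_one le_rfl n t ht
  simp only [one_pow, one_mul] at h
  rw [Finset.sum_range_succ'] at h ⊢
  have h1 : ∑ k ∈ Finset.range (n + 1), |φ (k + 1) t|
      = -∑ k ∈ Finset.range (n + 1), φ (k + 1) t := by
    rw [← Finset.sum_neg_distrib]
    exact Finset.sum_congr rfl fun k _ =>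
      abs_of_nonpos (hφ.nonpos hT hpε hpc (k + 1) (by omega) t ht)
  rw [h1, abs_of_nonneg (hφ.zero_nonneg hT hpε hpc ht)]
  linarith

/-- A nonnegative solution of the scalar Riccati equation is the limit of the truncated
generating functions, with a geometric rate. -/
lemma sum_sub_bounds (hφ : DirectedChainRiccati T ε c p φ) (hT : 0 < T) (hpε : 0 ≤ p * ε)
    (hpc : 0 ≤ p * c) {z : ℝ} (hz0 : 0 ≤ z) (hz1 : z ≤ 1) {F : ℝ → ℝ}
    (hF : ∀ t ∈ Set.Icc (0:ℝ) T,
      HasDerivWithinAt F (F t ^ 2 - p * ε * (1 - z)) (Set.Icc 0 T) t)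
    (hFT : F T = p * c * (1 - z)) (hF0 : ∀ t ∈ Set.Icc (0:ℝ) T, 0 ≤ F t)
    {M : ℝ} (hM : ∀ t ∈ Set.Icc (0:ℝ) T, φ 0 t ≤ M) (n : ℕ)
    {t : ℝ} (ht : t ∈ Set.Icc (0:ℝ) T) :
    0 ≤ ∑ k ∈ Finset.range (n + 2), z ^ k * φ k t - F t ∧
      ∑ k ∈ Finset.range (n + 2), z ^ k * φ k t - F t ≤ z ^ (n + 2) * (2 * M) ^ 2 * (T - t) := by
  set S : ℝ → ℝ := fun s => ∑ k ∈ Finset.range (n + 2), z ^ k * φ k s with hS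
  set R : ℝ → ℝ := fun s => remainder (fun k => z ^ k * φ k s) (n + 2) with hR
  set K : ℝ := z ^ (n + 2) * (2 * M) ^ 2 with hK
  have hS' : ∀ s ∈ Set.Icc (0:ℝ) T,
      HasDerivWithinAt S (S s ^ 2 - R s - p * ε * (1 - z)) (Set.Icc 0 T) s :=
    fun s hs => hφ.hasDeriv_sum z n hs
  have hS0 : ∀ s ∈ Set.Icc (0:ℝ) T, 0 ≤ S s := hφ.sum_nonneg hT hpε hpc hz0 hz1 n
  have hST : S T = p * c * (1 - z) := hφ.terminal_sum z n
  have hR0 : ∀ s ∈ Set.Icc (0:ℝ) T, 0 ≤ R s := fun s hs =>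
    remainder_nonneg (fun k hk =>
      mul_nonpos_of_nonneg_of_nonpos (by positivity) (hφ.nonpos hT hpε hpc k hk s hs)) _
  have hRK : ∀ s ∈ Set.Icc (0:ℝ) T, R s ≤ K := fun s hs => by
    refine (remainder_le (fun k => φ k s) hz0 hz1 (n + 2)).trans ?_
    have h1 := hφ.sum_abs_le hT hpε hpc n hs
    have h2 := hM s hs
    exact mul_le_mul_of_nonneg_left
      (pow_le_pow_left₀ (Finset.sum_nonneg fun _ _ => abs_nonneg _) (by linarith) 2)
      (by positivity)
  have hac : ContinuousOn (fun s => S s + F s) (Set.Icc 0 T) := fun s hs =>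
    (hS' s hs).continuousWithinAt.add (hF s hs).continuousWithinAt
  constructor
  · refine nonneg_of_deriv_le hT (u := fun s => S s - F s) hac
      (fun s hs => (hS' s hs).sub (hF s hs)) (fun s hs => ?_) ?_ t ht
    · nlinarith [hR0 s hs]
    · rw [hST, hFT, sub_self]
  · have := nonneg_of_deriv_le hT (u := fun s => K * (T - s) - (S s - F s)) hac
      (fun s hs => (((hasDerivWithinAt_id s _).const_sub T).const_mul K).sub
        ((hS' s hs).sub (hF s hs))) (fun s hs => ?_) ?_ t ht
    · linarith
    · have h1 : 0 ≤ (S s + F s) * (K * (T - s)) :=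
        mul_nonneg (add_nonneg (hS0 s hs) (hF0 s hs))
          (mul_nonneg (by positivity) (sub_nonneg.2 hs.2))
      nlinarith [hRK s hs]
    · rw [hST, hFT, sub_self, sub_self, mul_zero, sub_zero]

end DirectedChainRiccati

/-- The solution of `F' = F² - b²`, `F(T) = q`. -/
noncomputable def explicitSol (T b q s : ℝ) : ℝ :=
  b * ((b + q) * exp (b * (T - s)) - (b - q) * exp (-(b * (T - s)))) /
    ((b + q) * exp (b * (T - s)) + (b - q) * exp (-(b * (T - s))))

section explicitSol

variable {T b q s : ℝ}

lemma exp_neg_le_exp (hb : 0 < b) (hs : s ≤ T) :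
    exp (-(b * (T - s))) ≤ exp (b * (T - s)) := by
  have := mul_nonneg hb.le (sub_nonneg.2 hs)
  exact exp_le_exp.2 (by linarith)

lemma explicitSol_denom_pos (hb : 0 < b) (hq : 0 ≤ q) (hs : s ≤ T) :
    0 < (b + q) * exp (b * (T - s)) + (b - q) * exp (-(b * (T - s))) := by
  nlinarith [mul_nonneg hq (sub_nonneg.2 (exp_neg_le_exp hb hs)),
    mul_pos hb (exp_pos (b * (T - s))), mul_pos hb (exp_pos (-(b * (T - s))))]

lemma explicitSol_nonneg (hb : 0 < b) (hq : 0 ≤ q) (hs : s ≤ T) : 0 ≤ explicitSol T b q s := by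
  refine div_nonneg (mul_nonneg hb.le ?_) (explicitSol_denom_pos hb hq hs).le
  nlinarith [mul_nonneg hb.le (sub_nonneg.2 (exp_neg_le_exp hb hs)),
    mul_nonneg hq (exp_pos (b * (T - s))).le, mul_nonneg hq (exp_pos (-(b * (T - s)))).le]

lemma explicitSol_terminal (hb : 0 < b) : explicitSol T b q T = q := by
  simp only [explicitSol, sub_self, mul_zero, neg_zero, exp_zero, mul_one]
  rw [div_eq_iff (by linarith)]
  ring

lemma hasDerivAt_explicitSol (hb : 0 < b) (hq : 0 ≤ q) (hs : s ≤ T) :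
    HasDerivAt (explicitSol T b q) (explicitSol T b q s ^ 2 - b ^ 2) s := by
  have hne := (explicitSol_denom_pos hb hq hs).ne'
  have h1 : HasDerivAt (fun s => b * (T - s)) (b * (-1)) s :=
    ((hasDerivAt_id s).const_sub T).const_mul b
  have hE := h1.exp.const_mul (b + q)
  have hE' := h1.neg.exp.const_mul (b - q)
  have h := ((hE.sub hE').const_mul b).div (hE.add hE') hne
  refine (h.congr_deriv ?_ : HasDerivAt (explicitSol T b q) _ s)
  simp only [explicitSol, Pi.add_apply, Pi.sub_apply, Pi.neg_apply]
  field_simp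
  ring

end explicitSol

/-- The generating function `∑ₖ zᵏ φᵏ(t)` of the directed-chain Riccati solution
converges for `z ∈ [0,1)` and equals the explicit solution of the scalar Riccati
equation with `b(z) = √(pε(1−z))` and `q(z) = pc(1−z)`. -/
theorem stmt_5 (T ε c p : ℝ) (hT : 0 < T) (hε : 0 < ε) (hc : 0 ≤ c)
    (hp : p ∈ Set.Ioc (0:ℝ) 1)
    (φ : ℕ → ℝ → ℝ) (hφ : DirectedChainRiccati T ε c p φ)
    (z : ℝ) (hz : z ∈ Set.Ico (0:ℝ) 1) (t : ℝ) (ht : t ∈ Set.Icc (0:ℝ) T) :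
    HasSum (fun k : ℕ => z ^ k * φ k t)
      (Real.sqrt (p * ε * (1 - z)) *
        ((Real.sqrt (p * ε * (1 - z)) + p * c * (1 - z)) *
            exp (Real.sqrt (p * ε * (1 - z)) * (T - t)) -
          (Real.sqrt (p * ε * (1 - z)) - p * c * (1 - z)) *
            exp (-(Real.sqrt (p * ε * (1 - z)) * (T - t)))) /
        ((Real.sqrt (p * ε * (1 - z)) + p * c * (1 - z)) *
            exp (Real.sqrt (p * ε * (1 - z)) * (T - t)) +
          (Real.sqrt (p * ε * (1 - z)) - p * c * (1 - z)) *
            exp (-(Real.sqrt (p * ε * (1 - z)) * (T - t))))) := by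
  obtain ⟨hz0, hz1⟩ := hz
  have hpε : 0 < p * ε := mul_pos hp.1 hε
  have hpc : 0 ≤ p * c := mul_nonneg hp.1.le hc
  have hβ : 0 < p * ε * (1 - z) := mul_pos hpε (sub_pos.2 hz1)
  have hq : 0 ≤ p * c * (1 - z) := mul_nonneg hpc (sub_nonneg.2 hz1.le)
  have hb : 0 < Real.sqrt (p * ε * (1 - z)) := Real.sqrt_pos.2 hβ
  change HasSum _ (explicitSol T (Real.sqrt (p * ε * (1 - z))) (p * c * (1 - z)) t)
  obtain ⟨M, hM⟩ := isCompact_Icc.bddAbove_image (hφ.1 0).continuousOn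
  have hM' : ∀ s ∈ Set.Icc (0:ℝ) T, φ 0 s ≤ M := fun s hs => hM (Set.mem_image_of_mem _ hs)
  have hbounds := fun n => hφ.sum_sub_bounds hT hpε.le hpc hz0 hz1.le
    (F := explicitSol T (Real.sqrt (p * ε * (1 - z))) (p * c * (1 - z)))
    (fun s hs => by
      have h := (hasDerivAt_explicitSol hb hq hs.2).hasDerivWithinAt (s := Set.Icc 0 T)
      rwa [Real.sq_sqrt hβ.le] at h)
    (explicitSol_terminal hb) (fun s hs => explicitSol_nonneg hb hq hs.2) hM' n ht
  have hsummable : Summable fun k : ℕ => z ^ k * φ k t := by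
    refine Summable.of_norm (summable_of_sum_range_le (c := 2 * φ 0 t)
      (fun _ => norm_nonneg _) fun n => ?_)
    calc ∑ k ∈ Finset.range n, ‖z ^ k * φ k t‖ ≤ ∑ k ∈ Finset.range n, |φ k t| := by
          refine Finset.sum_le_sum fun k _ => ?_
          rw [Real.norm_eq_abs, abs_mul, abs_of_nonneg (pow_nonneg hz0 k)]
          exact mul_le_of_le_one_left (abs_nonneg _) (pow_le_one₀ hz0 hz1.le)
      _ ≤ ∑ k ∈ Finset.range (n + 2), |φ k t| :=
          Finset.sum_le_sum_of_subset_of_nonneg (Finset.range_mono (by omega))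
            fun _ _ _ => abs_nonneg _
      _ ≤ 2 * φ 0 t := hφ.sum_abs_le hT hpε.le hpc n ht
  rw [hsummable.hasSum_iff_tendsto_nat, ← Filter.tendsto_add_atTop_iff_nat 2,
    ← tendsto_sub_nhds_zero_iff]
  refine squeeze_zero (fun n => (hbounds n).1) (fun n => (hbounds n).2) ?_
  have hpow := (Filter.tendsto_add_atTop_iff_nat 2).2
    (tendsto_pow_atTop_nhds_zero_of_lt_one hz0 hz1)
  simpa using (hpow.mul_const ((2 * M) ^ 2)).mul_const (T - t)
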